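/- Let w be a non-increasing positive function on I=(0,∞), and let f be measurable on I with finite decreasing rearrangement f* satisfying lim_{t→∞} f*(t) > 0. Then for every ε > 0 there exists a measurable v : I → (0,∞), strictly positive everywhere, with v* = w (a.e.) and such that the rearrangement of f/v with respect to v·dm satisfies (f/v)^{*,v}(t) ≤ (1+ε)·(f*/w)^{*,w}(t) for all t ∈ (0, ∫_I w dm), where (f*/w)^{*,w} is the rearrangement of f*/w with respect to w·dm. -/

import Mathlib

open MeasureTheory Set Filter
open scoped ENNReal

/-- The interval `(0, a)` for `a : ℝ≥0∞` (equals `(0,∞)` when `a = ∞`). -/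
def Iset (a : ℝ≥0∞) : Set ℝ := {x : ℝ | 0 < x ∧ ENNReal.ofReal x < a}

/-- Lebesgue measure restricted to the interval `(0,a)`. -/
noncomputable def volI (a : ℝ≥0∞) : Measure ℝ := volume.restrict (Iset a)

/-- Decreasing rearrangement of an `ℝ≥0∞`-valued function with respect to a measure `μ`:
`f^{*,μ}(t) = inf {s > 0 : μ({f > s}) ≤ t}`. -/
noncomputable def rearrE (μ : Measure ℝ) (f : ℝ → ℝ≥0∞) (t : ℝ) : ℝ≥0∞ :=
  sInf {s : ℝ≥0∞ | 0 < s ∧ μ {x | s < f x} ≤ ENNReal.ofReal t}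

/-- Decreasing rearrangement of a real function with respect to a measure `μ` on `ℝ`:
`f^{*,μ}(t) = inf {s > 0 : μ({|f| > s}) ≤ t}`. -/
noncomputable def rearr (μ : Measure ℝ) (f : ℝ → ℝ) (t : ℝ) : ℝ≥0∞ :=
  rearrE μ (fun x => ENNReal.ofReal |f x|) t

/-- The measure `w·dm` on the set `I`. -/
noncomputable def wMeas (I : Set ℝ) (w : ℝ → ℝ) : Measure ℝ :=
  (volume.restrict I).withDensity (fun t => ENNReal.ofReal (w t))

/-- `W(t) = ∫₀ᵗ w dm`. -/
noncomputable def Wfun (w : ℝ → ℝ) (t : ℝ) : ℝ := ∫ s in Set.Ioo (0:ℝ) t, w s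

/-- `b = ∫_I w dm` as an extended real number. -/
noncomputable def bval (a : ℝ≥0∞) (w : ℝ → ℝ) : ℝ≥0∞ := ∫⁻ x in Iset a, ENNReal.ofReal (w x)

lemma aux_Iset : Iset ⊤ = Ioi (0:ℝ) := by
  ext x; simp [Iset]

noncomputable def phi (E : Set ℝ) (x : ℝ) : ℝ := (volume (E ∩ Iio x)).toReal

lemma phi_fin {E : Set ℝ} (hE : E ⊆ Ioi 0) (x : ℝ) : volume (E ∩ Iio x) ≠ ∞ := by
  have : volume (E ∩ Iio x) ≤ volume (Ioo 0 x) :=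
    measure_mono (fun y hy => ⟨hE hy.1, hy.2⟩)
  exact ne_top_of_le_ne_top (by simp) this

lemma phi_mono {E : Set ℝ} (hE : E ⊆ Ioi 0) : Monotone (phi E) := by
  intro x y hxy
  exact ENNReal.toReal_mono (phi_fin hE y) (measure_mono (by gcongr))

lemma phi_ofReal {E : Set ℝ} (hE : E ⊆ Ioi 0) (x : ℝ) :
    ENNReal.ofReal (phi E x) = volume (E ∩ Iio x) :=
  ENNReal.ofReal_toReal (phi_fin hE x)

lemma phi_lip {E : Set ℝ} (hE : E ⊆ Ioi 0) {x y : ℝ} (hxy : x ≤ y) :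
    phi E y ≤ phi E x + (y - x) := by
  have h : volume (E ∩ Iio y) ≤ volume (E ∩ Iio x) + volume (Ico x y) := by
    refine le_trans (measure_mono ?_) (measure_union_le _ _)
    intro z hz
    by_cases h : z < x
    · exact Or.inl ⟨hz.1, h⟩
    · exact Or.inr ⟨not_lt.1 h, hz.2⟩
  have h2 := ENNReal.toReal_mono (by simp [phi_fin hE x]) h
  rw [ENNReal.toReal_add (phi_fin hE x) (by simp)] at h2
  simpa [phi, hxy] using h2

lemma phi_cont {E : Set ℝ} (hE : E ⊆ Ioi 0) : Continuous (phi E) := by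
  have : LipschitzWith 1 (phi E) := by
    apply LipschitzWith.of_le_add
    intro x y
    rcases le_total x y with h | h
    · have := phi_mono hE h
      have := dist_nonneg (x := x) (y := y)
      linarith
    · have := phi_lip hE h
      rw [Real.dist_eq, abs_of_nonneg (by linarith)]
      exact this
  exact this.continuous

lemma phi_law {E : Set ℝ} (hE : E ⊆ Ioi 0) {t : ℝ} (ht : 0 ≤ t) :
    volume (E ∩ {x | phi E x ≤ t}) = min (ENNReal.ofReal t) (volume E) := by
  by_cases hall : ∀ x, phi E x ≤ t
  · have h1 : E ∩ {x | phi E x ≤ t} = E := by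
      ext x; simp [hall x]
    rw [h1, min_eq_right]
    have hU : E = ⋃ n : ℕ, E ∩ Iio (n : ℝ) := by
      rw [← inter_iUnion]
      symm; apply inter_eq_left.2
      intro x _
      obtain ⟨n, hn⟩ := exists_nat_gt x
      exact mem_iUnion.2 ⟨n, hn⟩
    have hm : Monotone (fun n : ℕ => E ∩ Iio (n : ℝ)) := by
      intro a b hab
      have : (a:ℝ) ≤ b := by exact_mod_cast hab
      dsimp only
      gcongr
    rw [hU, hm.measure_iUnion]
    refine iSup_le fun n => ?_
    rw [← phi_ofReal hE]
    exact ENNReal.ofReal_le_ofReal (hall _)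
  · push Not at hall
    obtain ⟨x0, hx0⟩ := hall
    have h0 : phi E 0 = 0 := by
      have : E ∩ Iio 0 = ∅ := by
        ext y; simp only [mem_inter_iff, mem_Iio, mem_empty_iff_false, iff_false, not_and, not_lt]
        intro hy; exact (hE hy).le
      simp [phi, this]
    have hx0p : 0 ≤ x0 := by
      by_contra hneg
      have := phi_mono hE (not_le.1 hneg).le
      linarith
    set S := {x | phi E x ≤ t} with hS
    have hbdd : BddAbove S := ⟨x0, fun y hy => by
      by_contra hlt
      have := phi_mono hE (not_le.1 hlt).le
      have : phi E y ≤ t := hy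
      linarith⟩
    have hne : S.Nonempty := ⟨0, by simp [hS, h0, ht]⟩
    have hcl : IsClosed S := isClosed_le (phi_cont hE) continuous_const
    have hz : sSup S ∈ S := hcl.csSup_mem hne hbdd
    have hSI : S = Iic (sSup S) := by
      ext y
      exact ⟨fun hy => le_csSup hbdd hy, fun hy => le_trans (phi_mono hE hy) hz⟩
    obtain ⟨z, -, hzt⟩ := intermediate_value_Icc hx0p (phi_cont hE).continuousOn
      (show t ∈ Icc (phi E 0) (phi E x0) from ⟨by rw [h0]; exact ht, hx0.le⟩)
    have heq : phi E (sSup S) = t := by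
      apply le_antisymm hz
      rw [← hzt]
      exact phi_mono hE (le_csSup hbdd hzt.le)
    have hle : ENNReal.ofReal t ≤ volume E := by
      rw [← heq, phi_ofReal hE]
      exact measure_mono inter_subset_left
    rw [min_eq_left hle, hSI, ← heq, phi_ofReal hE]
    apply measure_congr
    exact (ae_eq_refl _).inter Iio_ae_eq_Iic.symm

lemma phi_map {E : Set ℝ} (hE : E ⊆ Ioi 0) :
    (volume.restrict E).map (phi E) =
      volume.restrict {y : ℝ | 0 < y ∧ ENNReal.ofReal y ≤ volume E} := by
  have hmeas := (phi_cont hE).measurable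
  have key : ∀ t : ℝ, (volume.restrict E).map (phi E) (Iic t) =
      volume.restrict {y : ℝ | 0 < y ∧ ENNReal.ofReal y ≤ volume E} (Iic t) := by
    intro t
    rw [Measure.map_apply hmeas measurableSet_Iic,
      Measure.restrict_apply (hmeas measurableSet_Iic),
      Measure.restrict_apply measurableSet_Iic]
    rcases lt_or_ge t 0 with ht | ht
    · have h1 : phi E ⁻¹' Iic t ∩ E = ∅ := by
        ext x
        simp only [mem_inter_iff, mem_preimage, mem_Iic, mem_empty_iff_false, iff_false, not_and]
        intro h
        have : 0 ≤ phi E x := ENNReal.toReal_nonneg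
        linarith
      have h2 : Iic t ∩ {y : ℝ | 0 < y ∧ ENNReal.ofReal y ≤ volume E} = ∅ := by
        ext x
        simp only [mem_inter_iff, mem_ofPred_eq, mem_Iic, mem_empty_iff_false, iff_false, not_and]
        intro h h'
        linarith
      rw [h1, h2]
    · rw [inter_comm]
      refine (phi_law hE ht).trans ?_
      rcases le_total (ENNReal.ofReal t) (volume E) with h | h
      · rw [min_eq_left h]
        have : Iic t ∩ {y : ℝ | 0 < y ∧ ENNReal.ofReal y ≤ volume E} = Ioc 0 t := by
          ext y
          simp only [mem_inter_iff, mem_ofPred_eq, mem_Iic, mem_Ioc]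
          constructor
          · rintro ⟨a, b, c⟩; exact ⟨b, a⟩
          · rintro ⟨a, b⟩; exact ⟨b, a, (ENNReal.ofReal_le_ofReal b).trans h⟩
        rw [this]; simp
      · rw [min_eq_right h]
        have hfin : volume E ≠ ∞ := ne_top_of_le_ne_top ENNReal.ofReal_ne_top h
        have : Iic t ∩ {y : ℝ | 0 < y ∧ ENNReal.ofReal y ≤ volume E}
            = Ioc 0 (volume E).toReal := by
          ext y
          simp only [mem_inter_iff, mem_ofPred_eq, mem_Iic, mem_Ioc]
          have h3 : (volume E).toReal ≤ t := ENNReal.toReal_le_of_le_ofReal ht h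
          rw [ENNReal.ofReal_le_iff_le_toReal hfin]
          constructor
          · rintro ⟨a, b, c⟩; exact ⟨b, c⟩
          · rintro ⟨a, b⟩; exact ⟨b.trans h3, a, b⟩
        rw [this]; simp [ENNReal.ofReal_toReal hfin]
  refine Measure.ext_of_generateFrom_of_iUnion (range Iic) (fun n : ℕ => Iic (n:ℝ))
    ?_ isPiSystem_Iic ?_ (fun n => mem_range_self _) ?_ ?_
  · rw [← borel_eq_generateFrom_Iic]; exact BorelSpace.measurable_eq
  · ext x; simp only [mem_iUnion, mem_Iic, mem_univ, iff_true]; exact exists_nat_ge x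
  · intro n
    rw [key, Measure.restrict_apply measurableSet_Iic]
    refine ne_top_of_le_ne_top (b := volume (Ioc 0 (n:ℝ))) (by simp) (measure_mono ?_)
    rintro y ⟨a, b, -⟩; exact ⟨b, a⟩
  · rintro _ ⟨t, rfl⟩; exact key t

/-- Gluing: a decreasing sequence of sets exhausting `(0,∞)` gives a measure preserving map. -/
lemma exists_sigma (D : ℕ → Set ℝ) (hDm : ∀ n, MeasurableSet (D n)) (hD0 : D 0 = Ioi 0)
    (hanti : Antitone D) (hfin : volume (D 1) ≠ ∞) (hempty : ⋂ n, D n = ∅) :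
    ∃ σ : ℝ → ℝ, Measurable σ ∧
      (volume.restrict (Ioi 0)).map σ = volume.restrict (Ioi (0:ℝ)) ∧
      ∀ n, ∀ x ∈ D n \ D (n+1), ENNReal.ofReal (σ x) ≤ volume (D n) := by
  set E : ℕ → Set ℝ := fun n => D n \ D (n+1) with hEdef
  have hEm : ∀ n, MeasurableSet (E n) := fun n => (hDm n).diff (hDm _)
  have hE : ∀ n, E n ⊆ Ioi 0 := fun n x hx => by
    rw [← hD0]; exact hanti (Nat.zero_le n) hx.1
  have hfin' : ∀ n, volume (D (n+1)) ≠ ∞ := fun n =>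
    ne_top_of_le_ne_top hfin (measure_mono (hanti (by omega)))
  have hdisj : Pairwise (Function.onFun Disjoint E) := by
    intro i j hij
    refine Set.disjoint_left.2 fun x hi hj => ?_
    rcases lt_or_gt_of_ne hij with h | h
    · exact hi.2 (hanti (show i+1 ≤ j by omega) hj.1)
    · exact hj.2 (hanti (show j+1 ≤ i by omega) hi.1)
  have hUE : ⋃ n, E n = Ioi 0 := by
    apply subset_antisymm (iUnion_subset hE)
    intro x hx
    have hex : ∃ n, x ∉ D n := by
      by_contra hcon
      push Not at hcon
      have : x ∈ ⋂ n, D n := mem_iInter.2 hcon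
      rw [hempty] at this; exact this
    classical
    have h1 := Nat.find_spec hex
    have hpos : Nat.find hex ≠ 0 := by
      intro h0
      rw [h0, hD0] at h1
      exact h1 hx
    obtain ⟨k, hk⟩ := Nat.exists_eq_succ_of_ne_zero hpos
    have h2 : x ∈ D k := by
      by_contra hcon
      exact Nat.find_min hex (m := k) (by omega) hcon
    rw [hk] at h1
    exact mem_iUnion.2 ⟨k, h2, h1⟩
  set c : ℕ → ℝ := fun n => (volume (D (n+1))).toReal with hc
  have hc0 : ∀ n, 0 ≤ c n := fun n => ENNReal.toReal_nonneg
  have hcof : ∀ n, ENNReal.ofReal (c n) = volume (D (n+1)) := fun n =>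
    ENNReal.ofReal_toReal (hfin' n)
  have hadd : ∀ n, volume (D (n+1)) + volume (E n) = volume (D n) := by
    intro n
    rw [add_comm]
    exact measure_sdiff_add_inter (μ := volume) (D n) (hDm (n+1)) ▸ by
      rw [inter_eq_right.2 (hanti (Nat.le_succ n))]
  obtain ⟨σ, hσm, hσ⟩ := exists_measurable_piecewise E hEm (fun n x => c n + phi (E n) x)
    (fun n => ((phi_cont (hE n)).const_add (c n) |>.measurable)) (by
      intro i j hij x hx
      exact absurd hx.2 (Set.disjoint_left.1 (hdisj hij) hx.1))
  set J : ℕ → Set ℝ := fun n =>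
    {y | volume (D (n+1)) < ENNReal.ofReal y ∧ ENNReal.ofReal y ≤ volume (D n)} with hJ
  have hJm : ∀ n, MeasurableSet (J n) := fun n =>
    (measurableSet_lt measurable_const ENNReal.measurable_ofReal).inter
      (measurableSet_le ENNReal.measurable_ofReal measurable_const)
  have hJdisj : Pairwise (Function.onFun Disjoint J) := by
    have hlt : ∀ i j x, i < j → x ∈ J i → x ∈ J j → False := by
      intro i j x h hi hj
      exact absurd (hi.1.trans_le (hj.2.trans (measure_mono (hanti (show i+1 ≤ j by omega)))))
        (lt_irrefl _)
    intro i j hij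
    refine Set.disjoint_left.2 fun x hi hj => ?_
    rcases lt_or_gt_of_ne hij with h | h
    · exact hlt i j x h hi hj
    · exact hlt j i x h hj hi
  have hUJ : ⋃ n, J n = Ioi 0 := by
    apply subset_antisymm
    · refine iUnion_subset fun n y hy => ?_
      exact ENNReal.ofReal_pos.1 (lt_of_le_of_lt zero_le hy.1)
    · intro y hy
      have ht : Tendsto (fun n => volume (D n)) atTop (nhds 0) := by
        have := tendsto_measure_iInter_atTop (μ := volume) (s := D)
          (fun n => (hDm n).nullMeasurableSet) hanti ⟨1, hfin⟩
        rwa [hempty, measure_empty] at this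
      have hy' : 0 < ENNReal.ofReal y := ENNReal.ofReal_pos.2 hy
      have hex : ∃ n, volume (D n) < ENNReal.ofReal y := ((tendsto_order.1 ht).2 _ hy').exists
      classical
      have h1 := Nat.find_spec hex
      have hpos : Nat.find hex ≠ 0 := by
        intro h0
        rw [h0, hD0] at h1
        simp at h1
      obtain ⟨k, hk⟩ := Nat.exists_eq_succ_of_ne_zero hpos
      have h2 : ENNReal.ofReal y ≤ volume (D k) := by
        by_contra hcon
        exact Nat.find_min hex (m := k) (by omega) (not_le.1 hcon)
      rw [hk] at h1
      exact mem_iUnion.2 ⟨k, h1, h2⟩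
  have hpiece : ∀ n, (volume.restrict (E n)).map σ = volume.restrict (J n) := by
    intro n
    have h1 : (volume.restrict (E n)).map σ
        = (volume.restrict (E n)).map (fun x => c n + phi (E n) x) := by
      apply Measure.map_congr
      filter_upwards [ae_restrict_mem (hEm n)] with x hx using hσ n hx
    have h2 : (volume.restrict (E n)).map (fun x => c n + phi (E n) x)
        = ((volume.restrict (E n)).map (phi (E n))).map (fun y => c n + y) := by
      rw [Measure.map_map (measurable_const_add _) (phi_cont (hE n)).measurable]
      rfl
    rw [h1, h2, phi_map (hE n)]
    have hpre : {y : ℝ | 0 < y ∧ ENNReal.ofReal y ≤ volume (E n)} = (fun y => c n + y) ⁻¹' J n := by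
      ext y
      simp only [hJ, mem_preimage, mem_ofPred_eq]
      rw [← hcof n, ← hadd n, ← hcof n]
      constructor
      · rintro ⟨a, b⟩
        refine ⟨(ENNReal.ofReal_lt_ofReal_iff (by linarith [hc0 n])).2 (by linarith), ?_⟩
        rw [ENNReal.ofReal_add (hc0 n) a.le]
        gcongr
      · rintro ⟨a, b⟩
        have hy : 0 < y := by
          have := (ENNReal.ofReal_lt_ofReal_iff_of_nonneg (hc0 n)).1 a
          linarith
        rw [ENNReal.ofReal_add (hc0 n) hy.le] at b
        exact ⟨hy, (ENNReal.add_le_add_iff_left ENNReal.ofReal_ne_top).1 b⟩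
    rw [hpre]
    exact ((measurePreserving_add_left volume (c n)).restrict_preimage (hJm n)).map_eq
  refine ⟨σ, hσm, ?_, ?_⟩
  · have h1 : volume.restrict (Ioi (0:ℝ)) = Measure.sum (fun n => volume.restrict (E n)) := by
      rw [← hUE, Measure.restrict_iUnion hdisj hEm]
    have h2 : volume.restrict (Ioi (0:ℝ)) = Measure.sum (fun n => volume.restrict (J n)) := by
      rw [← hUJ, Measure.restrict_iUnion hJdisj hJm]
    calc (volume.restrict (Ioi (0:ℝ))).map σ
        = Measure.sum (fun n => (volume.restrict (E n)).map σ) := by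
          rw [h1, Measure.map_sum hσm.aemeasurable]
      _ = Measure.sum (fun n => volume.restrict (J n)) := by simp only [hpiece]
      _ = _ := h2.symm
  · intro n x hx
    have hphi : 0 ≤ phi (E n) x := ENNReal.toReal_nonneg
    rw [hσ n hx]
    simp only []
    rw [ENNReal.ofReal_add (hc0 n) hphi, hcof, phi_ofReal (hE n), ← hadd n]
    gcongr
    exact inter_subset_left

lemma rearrE_antitone (μ : Measure ℝ) (f : ℝ → ℝ≥0∞) : Antitone (rearrE μ f) := by
  intro a b hab
  apply sInf_le_sInf
  rintro s ⟨h1, h2⟩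
  exact ⟨h1, h2.trans (ENNReal.ofReal_le_ofReal hab)⟩

lemma le_rearrE {μ : Measure ℝ} {f : ℝ → ℝ≥0∞} {t : ℝ} {s : ℝ≥0∞}
    (h : ENNReal.ofReal t < μ {x | s < f x}) : s ≤ rearrE μ f t := by
  refine le_sInf ?_
  rintro s' ⟨-, h2⟩
  by_contra hlt
  push Not at hlt
  have : μ {x | s < f x} ≤ μ {x | s' < f x} := measure_mono (fun x hx => hlt.trans hx)
  exact absurd (h.trans_le (this.trans h2)) (lt_irrefl _)

lemma rearr_w (w : ℝ → ℝ) (hw_pos : ∀ x ∈ Iset ⊤, 0 < w x) (hw_anti : AntitoneOn w (Iset ⊤)) :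
    ∀ᵐ t ∂(volI ⊤), rearr (volI ⊤) w t = ENNReal.ofReal (w t) := by
  have hcount := hw_anti.countable_not_continuousWithinAt
  unfold volI
  rw [aux_Iset] at *
  have h1 : ∀ᵐ t ∂(volume.restrict (Ioi (0:ℝ))),
      t ∉ {x | x ∈ Ioi (0:ℝ) ∧ ¬ ContinuousWithinAt w (Ioi 0) x} :=
    hcount.ae_notMem _
  filter_upwards [h1, ae_restrict_mem measurableSet_Ioi] with t ht htp
  have hcont : ContinuousAt w t := by
    have : ContinuousWithinAt w (Ioi 0) t := by
      by_contra hcon; exact ht ⟨htp, hcon⟩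
    exact this.continuousAt (Ioi_mem_nhds htp)
  have htp' : (0:ℝ) < t := htp
  unfold rearr
  apply le_antisymm
  · apply sInf_le
    refine ⟨ENNReal.ofReal_pos.2 (hw_pos t htp), ?_⟩
    rw [Measure.restrict_apply' measurableSet_Ioi]
    have : volume (Ioo 0 t) = ENNReal.ofReal t := by simp
    rw [← this]
    apply measure_mono
    rintro x ⟨hx, hx0⟩
    refine ⟨hx0, ?_⟩
    by_contra hcon
    have h2 := hw_anti htp hx0 (not_lt.1 hcon)
    have hx' : ENNReal.ofReal (w t) < ENNReal.ofReal |w x| := hx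
    rw [abs_of_pos (hw_pos x hx0)] at hx'
    exact absurd (hx'.trans_le (ENNReal.ofReal_le_ofReal h2)) (lt_irrefl _)
  · refine le_of_forall_lt fun s hs => ?_
    obtain ⟨s', hss', hs'⟩ := exists_between hs
    refine hss'.trans_le (le_rearrE ?_)
    have hc2 : ContinuousAt (fun x => ENNReal.ofReal (w x)) t :=
      ENNReal.continuous_ofReal.continuousAt.comp hcont
    have hev : ∀ᶠ x in nhds t, s' < ENNReal.ofReal (w x) := hc2.eventually (lt_mem_nhds hs')
    obtain ⟨δ, hδ, hball⟩ := Metric.eventually_nhds_iff.1 hev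
    have hy := hball (y := t + δ/2) (by rw [Real.dist_eq]; rw [add_sub_cancel_left, abs_of_pos (by linarith)]; linarith)
    have hlt : ENNReal.ofReal t < ENNReal.ofReal (t + δ/2) :=
      (ENNReal.ofReal_lt_ofReal_iff (by linarith)).2 (by linarith)
    refine hlt.trans_le ?_
    rw [Measure.restrict_apply' measurableSet_Ioi]
    have : volume (Ioo 0 (t+δ/2)) = ENNReal.ofReal (t+δ/2) := by simp
    rw [← this]
    apply measure_mono
    rintro x ⟨hx0, hx⟩
    refine ⟨?_, hx0⟩
    have h2 := hw_anti (show x ∈ Ioi 0 from hx0) (show t + δ/2 ∈ Ioi 0 by simp; linarith) hx.le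
    have : s' < ENNReal.ofReal (w x) := hy.trans_le (ENNReal.ofReal_le_ofReal h2)
    rw [← abs_of_pos (hw_pos x hx0)] at this
    exact this

lemma exists_tau (f : ℝ → ℝ) (hf_meas : Measurable f)
    (hf_fin : ∀ t ∈ Iset ⊤, rearr (volI ⊤) f t ≠ ∞)
    (α : ℝ≥0∞) (hα : 0 < α)
    (hlim : Tendsto (fun t => rearr (volI ⊤) f t) atTop (nhds α))
    (ε : ℝ) (hε : 0 < ε) :
    ∃ τ : ℝ → ℝ, MeasurePreserving τ (volI ⊤) (volI ⊤) ∧ (∀ x, 0 < τ x) ∧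
      ∀ᵐ x ∂(volI ⊤), ENNReal.ofReal |f x| ≤
        ENNReal.ofReal (1 + ε) * rearr (volI ⊤) f (τ x) := by
  have hvol : volI ⊤ = volume.restrict (Ioi (0:ℝ)) := by rw [volI, aux_Iset]
  have hanti : Antitone (rearr (volI ⊤) f) := rearrE_antitone _ _
  have hαle : ∀ t, α ≤ rearr (volI ⊤) f t := fun t => hanti.le_of_tendsto hlim t
  have hαfin : α ≠ ∞ :=
    ne_top_of_le_ne_top (hf_fin 1 (by rw [aux_Iset]; exact (one_pos : (0:ℝ) < 1))) (hαle 1)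
  set a := α.toReal with ha
  have hapos : 0 < a := ENNReal.toReal_pos hα.ne' hαfin
  have haof : ENNReal.ofReal a = α := ENNReal.ofReal_toReal hαfin
  set L : ℕ → Set ℝ := fun n => {x | a * (1+ε)^n < |f x|} with hL
  have hLm : ∀ n, MeasurableSet (L n) := fun n => measurableSet_lt measurable_const hf_meas.abs
  set D : ℕ → Set ℝ := fun n => if n = 0 then Ioi 0 else Ioi 0 ∩ L n with hD
  have hDs : ∀ n, D (n+1) = Ioi 0 ∩ L (n+1) := fun n => by simp [hD]
  have hD0 : D 0 = Ioi 0 := by simp [hD]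
  have hmeasD : ∀ n, volume (D (n+1)) = volI ⊤ {x | ENNReal.ofReal (a * (1+ε)^(n+1)) <
      ENNReal.ofReal |f x|} := by
    intro n
    rw [hvol, Measure.restrict_apply' measurableSet_Ioi, hDs, inter_comm]
    congr 2
    ext x
    simp only [hL, mem_ofPred_eq]
    rw [ENNReal.ofReal_lt_ofReal_iff_of_nonneg (by positivity)]
  obtain ⟨σ, hσm, hσ, hσle⟩ := exists_sigma D (by
      intro n
      rcases n with _ | n
      · rw [hD0]; exact measurableSet_Ioi
      · rw [hDs]; exact measurableSet_Ioi.inter (hLm _)) hD0 (by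
      apply antitone_nat_of_succ_le
      intro n x hx
      rw [hDs] at hx
      rcases n with _ | n
      · rw [hD0]; exact hx.1
      · rw [hDs]
        have hx2 : a * (1+ε)^(n+1+1) < |f x| := hx.2
        have : (1+ε)^(n+1) ≤ (1+ε)^(n+1+1) := pow_le_pow_right₀ (by linarith) (by omega)
        have h3 : a * (1+ε)^(n+1) < |f x| := by nlinarith
        exact ⟨hx.1, h3⟩) (by
      rw [hmeasD 0]
      have hlt : α < ENNReal.ofReal (a * (1+ε)^(0+1)) := by
        rw [← haof]
        apply (ENNReal.ofReal_lt_ofReal_iff (by positivity)).2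
        rw [zero_add, pow_one]
        nlinarith
      obtain ⟨t, ht⟩ := ((tendsto_order.1 hlim).2 _ hlt).exists
      obtain ⟨s, ⟨-, hs2⟩, hs3⟩ := sInf_lt_iff.1 ht
      refine ne_top_of_le_ne_top ENNReal.ofReal_ne_top (le_trans (measure_mono ?_) hs2)
      intro x hx
      exact hs3.trans hx) (by
      apply eq_empty_of_forall_notMem
      intro x hx
      rw [mem_iInter] at hx
      obtain ⟨n, hn⟩ := pow_unbounded_of_one_lt (|f x| / a) (show 1 < 1 + ε by linarith)
      have h1 := hx (n+1)
      rw [hDs] at h1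
      have h2 : a * (1+ε)^(n+1) < |f x| := h1.2
      have h3 : (1+ε)^n ≤ (1+ε)^(n+1) := pow_le_pow_right₀ (by linarith) (by omega)
      rw [div_lt_iff₀ hapos] at hn
      nlinarith)
  have hmpσ : MeasurePreserving σ (volI ⊤) (volI ⊤) := ⟨hσm, by rw [hvol]; exact hσ⟩
  set τ : ℝ → ℝ := fun x => if 0 < σ x then σ x else 1 with hτ
  have hτm : Measurable τ :=
    Measurable.ite (measurableSet_lt measurable_const hσm) hσm measurable_const
  have hpos : ∀ᵐ x ∂(volI ⊤), 0 < σ x := by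
    have : ∀ᵐ y ∂(volI ⊤), 0 < y := by
      rw [hvol]; exact ae_restrict_mem measurableSet_Ioi
    exact hmpσ.quasiMeasurePreserving.ae this
  have hτσ : τ =ᵐ[volI ⊤] σ := by
    filter_upwards [hpos] with x hx
    simp [hτ, hx]
  refine ⟨τ, ⟨hτm, ?_⟩, ?_, ?_⟩
  · rw [Measure.map_congr hτσ, hmpσ.map_eq]
  · intro x
    simp only [hτ]
    split_ifs with h
    · exact h
    · exact one_pos
  have hne : ∀ᵐ x ∂(volI ⊤), ∀ n : ℕ, σ x ≠ (volume (D n)).toReal := by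
    have : ∀ᵐ y ∂(volI ⊤), ∀ n : ℕ, y ≠ (volume (D n)).toReal := by
      rw [ae_all_iff]
      intro n
      rw [hvol]
      exact ae_restrict_of_ae (Measure.ae_ne volume _)
    exact hmpσ.quasiMeasurePreserving.ae this
  have hI : ∀ᵐ x ∂(volI ⊤), x ∈ Ioi (0:ℝ) := by
    rw [hvol]; exact ae_restrict_mem measurableSet_Ioi
  filter_upwards [hτσ, hpos, hne, hI] with x h1 h2 h3 h4
  rw [h1]
  have hbase : ∀ n, x ∈ D n → ENNReal.ofReal (a * (1+ε)^n) ≤ rearr (volI ⊤) f (σ x) ∨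
      x ∈ D (n+1) := by
    intro n hn
    by_cases hx : x ∈ D (n+1)
    · exact Or.inr hx
    left
    rcases n with _ | n
    · simpa [haof] using hαle _
    · apply le_rearrE
      rw [← hmeasD]
      refine lt_of_le_of_ne (hσle (n+1) x ⟨hn, hx⟩) fun heq => h3 (n+1) ?_
      rw [← heq, ENNReal.toReal_ofReal h2.le]
  -- choose the index
  have hex : ∃ n, x ∉ D n := by
    obtain ⟨n, hn⟩ := pow_unbounded_of_one_lt (|f x| / a) (show 1 < 1 + ε by linarith)
    refine ⟨n+1, fun h => ?_⟩
    rw [hDs] at h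
    have h2 : a * (1+ε)^(n+1) < |f x| := h.2
    have h3 : (1+ε)^n ≤ (1+ε)^(n+1) := pow_le_pow_right₀ (by linarith) (by omega)
    rw [div_lt_iff₀ hapos] at hn
    nlinarith
  classical
  have g1 := Nat.find_spec hex
  have gpos : Nat.find hex ≠ 0 := by
    intro h0
    rw [h0, hD0] at g1
    exact g1 h4
  obtain ⟨k, hk⟩ := Nat.exists_eq_succ_of_ne_zero gpos
  have g2 : x ∈ D k := by
    by_contra hcon
    exact Nat.find_min hex (m := k) (by omega) hcon
  rw [hk] at g1
  have g3 := (hbase k g2).resolve_right g1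
  have g4 : |f x| ≤ a * (1+ε)^(k+1) := by
    by_contra hcon
    apply g1
    rw [Nat.succ_eq_add_one, hDs]
    exact ⟨h4, not_le.1 hcon⟩
  calc ENNReal.ofReal |f x| ≤ ENNReal.ofReal ((1+ε) * (a * (1+ε)^k)) := by
        apply ENNReal.ofReal_le_ofReal
        refine g4.trans (le_of_eq ?_)
        ring
    _ = ENNReal.ofReal (1+ε) * ENNReal.ofReal (a * (1+ε)^k) :=
        ENNReal.ofReal_mul (by linarith)
    _ ≤ _ := by gcongr

/-- On `I=(0,∞)`, if `f*` is finite and `lim_{t→∞} f*(t) = α > 0`, then for every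
`ε > 0` there is a strictly positive measurable `v` with `v* = w` a.e. and
`(f/v)^{*,v}(t) ≤ (1+ε)·(f*/w)^{*,w}(t)` for all `t ∈ (0, ∫_I w dm)`. -/
theorem stmt_7 (w f : ℝ → ℝ)
    (hw_pos : ∀ x ∈ Iset ⊤, 0 < w x) (hw_anti : AntitoneOn w (Iset ⊤)) (hw_meas : Measurable w)
    (hf_meas : Measurable f)
    (hf_fin : ∀ t ∈ Iset ⊤, rearr (volI ⊤) f t ≠ ∞)
    (α : ℝ≥0∞) (hα : 0 < α)
    (hlim : Tendsto (fun t => rearr (volI ⊤) f t) atTop (nhds α))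
    (ε : ℝ) (hε : 0 < ε) :
    ∃ v : ℝ → ℝ, Measurable v ∧ (∀ x ∈ Iset ⊤, 0 < v x) ∧
      (∀ᵐ t ∂(volI ⊤), rearr (volI ⊤) v t = ENNReal.ofReal (w t)) ∧
      ∀ t : ℝ, 0 < t → ENNReal.ofReal t < bval ⊤ w →
        rearr (wMeas (Iset ⊤) v) (fun y => f y / v y) t
          ≤ ENNReal.ofReal (1 + ε) *
              rearrE (wMeas (Iset ⊤) w) (fun s => rearr (volI ⊤) f s / ENNReal.ofReal (w s)) t := by
  obtain ⟨τ, hτ, hτpos, hτf⟩ := exists_tau f hf_meas hf_fin α hα hlim ε hε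
  have hτI : ∀ x, τ x ∈ Iset ⊤ := fun x => by rw [aux_Iset]; exact hτpos x
  have hvpos : ∀ x, 0 < w (τ x) := fun x => hw_pos _ (hτI x)
  have hfs : Measurable (rearr (volI ⊤) f) := (rearrE_antitone _ _).measurable
  have hwE : Measurable (fun s => ENNReal.ofReal (w s)) := hw_meas.ennreal_ofReal
  refine ⟨fun x => w (τ x), hw_meas.comp hτ.measurable, fun x _ => hvpos x, ?_, ?_⟩
  · filter_upwards [rearr_w w hw_pos hw_anti] with t ht
    rw [← ht]
    unfold rearr rearrE
    congr 1
    ext s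
    have : volI ⊤ {x | s < ENNReal.ofReal |w (τ x)|} = volI ⊤ {x | s < ENNReal.ofReal |w x|} :=
      hτ.measure_preimage (s := {x | s < ENNReal.ofReal |w x|})
        (measurableSet_lt measurable_const hw_meas.abs.ennreal_ofReal).nullMeasurableSet
    simp only [mem_ofPred_eq, this]
  · intro t _ _
    have hR0 : ENNReal.ofReal (1+ε) ≠ 0 := (ENNReal.ofReal_pos.2 (by linarith)).ne'
    have hRt : ENNReal.ofReal (1+ε) ≠ ∞ := ENNReal.ofReal_ne_top
    rw [mul_comm, ← ENNReal.div_le_iff hR0 hRt]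
    refine le_sInf ?_
    rintro s ⟨hs0, hs⟩
    rw [ENNReal.div_le_iff hR0 hRt]
    refine sInf_le ⟨pos_of_ne_zero (mul_ne_zero hs0.ne' hR0), le_trans ?_ hs⟩
    set A : Set ℝ := {x | s < rearr (volI ⊤) f x / ENNReal.ofReal (w x)} with hA
    have hAm : MeasurableSet A := measurableSet_lt measurable_const (hfs.div hwE)
    have heq : wMeas (Iset ⊤) (fun x => w (τ x)) (τ ⁻¹' A) = wMeas (Iset ⊤) w A := by
      unfold wMeas
      rw [withDensity_apply _ (hτ.measurable hAm), withDensity_apply _ hAm]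
      exact hτ.setLIntegral_comp_preimage hAm hwE
    rw [← heq]
    apply measure_mono_ae
    have hac : wMeas (Iset ⊤) (fun x => w (τ x)) ≪ volI ⊤ := withDensity_absolutelyContinuous _ _
    filter_upwards [hac.ae_le hτf] with x hx hxs
    have hxs' : s * ENNReal.ofReal (1+ε) < ENNReal.ofReal |f x / w (τ x)| := hxs
    show s < rearr (volI ⊤) f (τ x) / ENNReal.ofReal (w (τ x))
    rw [abs_div, abs_of_pos (hvpos x), ENNReal.ofReal_div_of_pos (hvpos x)] at hxs'
    have h1 : s * ENNReal.ofReal (1+ε) <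
        (rearr (volI ⊤) f (τ x) / ENNReal.ofReal (w (τ x))) * ENNReal.ofReal (1+ε) := by
      refine hxs'.trans_le ?_
      rw [mul_comm, ← mul_div_assoc]
      exact ENNReal.div_le_div_right hx _
    exact lt_of_mul_lt_mul_right' h1
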